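/- Let Y be a finite set, ε ∈ (0,1), g a probability distribution on Y, and let Π = B(g,ε) be the partition of Y into bins B_i = {y : g(y) ∈ ((1−ε)^{i+1}, (1−ε)^i]} for i = 0,1,2,… together with B_0' = {y : g(y) = 0}. Then ‖g^Π − g‖_TV ≤ ε, where g^Π is the Π-coarsening of g. -/

import Mathlib

open Finset

/-- A partition of a finite type `Y`, given as the map sending each element to its block. -/
def IsBlockFun {Y : Type*} [Fintype Y] (π : Y → Finset Y) : Prop :=
  (∀ y, y ∈ π y) ∧ ∀ y z, z ∈ π y → π z = π y

/-- The `π`-coarsening of `p`: each element gets the average of `p` over its block. -/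
noncomputable def coarsen {Y : Type*} [Fintype Y] (p : Y → ℝ) (π : Y → Finset Y) (y : Y) : ℝ :=
  (∑ z ∈ π y, p z) / (π y).card

open scoped Classical

/-- The fixed-width log-probability bin (block) of  under  with parameter . -/
noncomputable def binBlock {Y : Type*} [Fintype Y] (g : Y → ℝ) (ε : ℝ) (y : Y) : Finset Y :=
  Finset.univ.filter (fun z =>
    (g y = 0 ∧ g z = 0) ∨ ∃ i : ℕ, g y ∈ Set.Ioc ((1-ε)^(i+1)) ((1-ε)^i)
      ∧ g z ∈ Set.Ioc ((1-ε)^(i+1)) ((1-ε)^i))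

theorem bin_unique {r x : ℝ} (h0 : 0 < r) (h1 : r < 1) {i j : ℕ}
    (hi : x ∈ Set.Ioc (r^(i+1)) (r^i)) (hj : x ∈ Set.Ioc (r^(j+1)) (r^j)) : i = j := by
  rcases lt_trichotomy i j with h | h | h
  · have := pow_le_pow_of_le_one h0.le h1.le (show i + 1 ≤ j from h)
    linarith [hi.1, hj.2]
  · exact h
  · have := pow_le_pow_of_le_one h0.le h1.le (show j + 1 ≤ i from h)
    linarith [hj.1, hi.2]

theorem binBlock_isBlockFun {Y : Type*} [Fintype Y] (ε : ℝ) (hε : ε ∈ Set.Ioo (0:ℝ) 1)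
    (g : Y → ℝ) (hg : ∀ y, 0 ≤ g y) (hg1 : ∀ y, g y ≤ 1) : IsBlockFun (binBlock g ε) := by
  have h0 : 0 < 1 - ε := by linarith [hε.2]
  have h1 : 1 - ε < 1 := by linarith [hε.1]
  constructor
  · intro y
    simp only [binBlock, Finset.mem_filter, Finset.mem_univ, true_and]
    rcases (hg y).eq_or_lt with h | h
    · exact Or.inl ⟨h.symm, h.symm⟩
    · obtain ⟨n, hn⟩ := exists_nat_pow_near_of_lt_one h (hg1 y) h0 h1
      exact Or.inr ⟨n, hn, hn⟩
  · intro y z hz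
    simp only [binBlock, Finset.mem_filter, Finset.mem_univ, true_and] at hz
    ext w
    simp only [binBlock, Finset.mem_filter, Finset.mem_univ, true_and]
    rcases hz with ⟨hy, hz⟩ | ⟨i, hy, hz⟩
    · rw [hy, hz]
    · have hyp : g y ≠ 0 := ((pow_pos h0 _).trans hy.1).ne'
      have hzp : g z ≠ 0 := ((pow_pos h0 _).trans hz.1).ne'
      constructor
      · rintro (⟨h, _⟩ | ⟨j, hj, hw⟩)
        · exact absurd h hzp
        · obtain rfl := bin_unique h0 h1 hz hj
          exact Or.inr ⟨i, hy, hw⟩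
      · rintro (⟨h, _⟩ | ⟨j, hj, hw⟩)
        · exact absurd h hyp
        · obtain rfl := bin_unique h0 h1 hy hj
          exact Or.inr ⟨i, hz, hw⟩

theorem sum_coarsen {Y : Type*} [Fintype Y] (p : Y → ℝ) (π : Y → Finset Y) (h : IsBlockFun π) :
    ∑ y, coarsen p π y = ∑ y, p y := by
  have key : ∀ y z, z ∈ π y ↔ y ∈ π z := fun y z =>
    ⟨fun hz => h.2 y z hz ▸ h.1 y, fun hy => h.2 z y hy ▸ h.1 z⟩
  simp only [coarsen, Finset.sum_div]
  rw [Finset.sum_comm' (t' := Finset.univ) (s' := π) (by intro x y; simp [key x y])]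
  refine Finset.sum_congr rfl fun z _ => ?_
  have hc : ((π z).card : ℝ) ≠ 0 := by
    exact_mod_cast (Finset.card_pos.2 ⟨z, h.1 z⟩).ne'
  rw [Finset.sum_congr rfl (g := fun _ => p z / (π z).card)
    (fun y hy => by rw [h.2 z y hy]), Finset.sum_const, nsmul_eq_mul]
  field_simp

theorem stmt12 {Y : Type*} [Fintype Y] (ε : ℝ) (hε : ε ∈ Set.Ioo (0:ℝ) 1)
    (g : Y → ℝ) (hg : ∀ y, 0 ≤ g y) (hg1 : ∑ y, g y = 1) :
    ∑ y, max (coarsen g (binBlock g ε) y - g y) 0 ≤ ε := by 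
  have h0 : 0 < 1 - ε := by linarith [hε.2]
  have hle : ∀ y, g y ≤ 1 := fun y =>
    hg1 ▸ Finset.single_le_sum (fun z _ => hg z) (Finset.mem_univ y)
  have hB := binBlock_isBlockFun ε hε g hg hle
  calc ∑ y, max (coarsen g (binBlock g ε) y - g y) 0
      ≤ ∑ y, ε * coarsen g (binBlock g ε) y := by
        refine Finset.sum_le_sum fun y _ => ?_
        have hc : (0:ℝ) < ((binBlock g ε y).card : ℝ) := by
          exact_mod_cast Finset.card_pos.2 ⟨y, hB.1 y⟩
        have hn : 0 ≤ coarsen g (binBlock g ε) y :=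
          div_nonneg (Finset.sum_nonneg fun z _ => hg z) hc.le
        refine max_le ?_ (mul_nonneg hε.1.le hn)
        suffices hs : (1 - ε) * coarsen g (binBlock g ε) y ≤ g y by linarith
        have hz : ∀ z ∈ binBlock g ε y, (1 - ε) * g z ≤ g y := by
          intro z hz
          simp only [binBlock, Finset.mem_filter, Finset.mem_univ, true_and] at hz
          rcases hz with ⟨hy, hz⟩ | ⟨i, hy, hz⟩
          · simp [hy, hz]
          · calc (1 - ε) * g z ≤ (1 - ε) * (1 - ε)^i := mul_le_mul_of_nonneg_left hz.2 h0.le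
              _ = (1 - ε)^(i+1) := by ring
              _ ≤ g y := hy.1.le
        have hsum := Finset.sum_le_card_nsmul _ _ _ hz
        rw [nsmul_eq_mul, ← Finset.mul_sum] at hsum
        rw [coarsen, ← mul_div_assoc, div_le_iff₀ hc]
        linarith
    _ = ε := by rw [← Finset.mul_sum, sum_coarsen _ _ hB, hg1, mul_one]
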